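/- Let (X, σ_X) be a one-sided subshift, p ∈ ℕ, and φ ∈ D_w(X, p). Then: (i) there exists γ > 0 such that for each I ∈ L(X) there exist symbols i, j ∈ A with iI, Ij ∈ L(X), φ(iI) ≥ γ φ(I) and φ(Ij) ≥ γ φ(I); (ii) with u_n = Σ_{J ∈ L_n(X)} φ(J), the limit u = lim_{n→∞} (1/n) log u_n exists, and there is a constant c > 0 with c^{-1} exp(nu) ≤ u_n ≤ c exp(nu) for all n. -/

import Mathlib

open MeasureTheory Filter Topology
open scoped Classical ENNReal NNReal

noncomputable section

/-- The left shift on one-sided sequences. -/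
def shiftMap {A : Type} : (ℕ → A) → (ℕ → A) := fun x n => x (n + 1)

/-- The cylinder set of a finite word. -/
def cyl {A : Type} (I : List A) : Set (ℕ → A) :=
  {x | ∀ i : Fin I.length, x i = I.get i}

/-- Membership of a word in the language of `X`. -/
def Lang {A : Type} (X : Set (ℕ → A)) (I : List A) : Prop :=
  (cyl I ∩ X).Nonempty

/-- `X` is a (nonempty) one-sided subshift. -/
def IsSubshift {A : Type} [TopologicalSpace A] (X : Set (ℕ → A)) : Prop :=
  X.Nonempty ∧ IsCompact X ∧ shiftMap '' X ⊆ X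

/-- weak `p`-specification -/
def WeakSpecification {A : Type} (X : Set (ℕ → A)) (p : ℕ) : Prop :=
  ∀ I J : List A, Lang X I → Lang X J →
    ∃ K : List A, K.length ≤ p ∧ Lang X (I ++ K ++ J)

/-- `p`-specification -/
def Specification {A : Type} (X : Set (ℕ → A)) (p : ℕ) : Prop :=
  ∀ I J : List A, Lang X I → Lang X J →
    ∃ K : List A, K.length = p ∧ Lang X (I ++ K ++ J)

/-- invariant probability measures supported on `X` (predicate on plain measures) -/
def InvOn {A : Type} [MeasurableSpace A] (X : Set (ℕ → A)) (μ : Measure (ℕ → A)) : Prop :=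
  IsProbabilityMeasure μ ∧ μ.map shiftMap = μ ∧ μ X = 1

/-- the set of shift-invariant probability measures on `X` -/
def MInv {A : Type} [MeasurableSpace A] (X : Set (ℕ → A)) :
    Set (ProbabilityMeasure (ℕ → A)) :=
  {μ | (μ : Measure (ℕ → A)).map shiftMap = (μ : Measure (ℕ → A)) ∧
    (μ : Measure (ℕ → A)) X = 1}

/-- measure of a word: `μ([I] ∩ X)` -/
def mw {A : Type} [MeasurableSpace A] (X : Set (ℕ → A)) (μ : Measure (ℕ → A))
    (I : List A) : ℝ :=
  (μ (cyl I ∩ X)).toReal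

/-- the initial word of length `n` of a sequence -/
def wordOf {A : Type} (x : ℕ → A) (n : ℕ) : List A := List.ofFn (fun i : Fin n => x i)

/-- `n`-block entropy -/
def Hblock {A : Type} [Fintype A] [MeasurableSpace A] (X : Set (ℕ → A))
    (μ : Measure (ℕ → A)) (n : ℕ) : ℝ :=
  -∑ w : Fin n → A, mw X μ (List.ofFn w) * Real.log (mw X μ (List.ofFn w))

/-- measure-theoretic entropy (the limit exists for invariant measures; `liminf` realizes it) -/
def ent {A : Type} [Fintype A] [MeasurableSpace A] (X : Set (ℕ → A))
    (μ : Measure (ℕ → A)) : ℝ :=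
  liminf (fun n : ℕ => Hblock X μ n / n) atTop

/-- extended logarithm: `log t`, with value `⊥` for `t ≤ 0` -/
def elog (t : ℝ) : EReal := if t ≤ 0 then ⊥ else ((Real.log t : ℝ) : EReal)

/-- the integral `∫ log g dμ`, valued in `ℝ ∪ {−∞}` -/
def intlog {Ω : Type*} [MeasurableSpace Ω] (μ : Measure Ω) (g : Ω → ℝ) : EReal :=
  ((∫⁻ x, ENNReal.ofReal (Real.log (g x)) ∂μ : ℝ≥0∞) : EReal) -
    ((∫⁻ x, (if g x ≤ 0 then (⊤ : ℝ≥0∞) else ENNReal.ofReal (-Real.log (g x))) ∂μ : ℝ≥0∞) : EReal)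

/-- sub-additive potential `Φ = (log φ_n)_{n ≥ 1}` -/
def SubaddPot {A : Type} [TopologicalSpace A] (X : Set (ℕ → A))
    (φ : ℕ → (ℕ → A) → ℝ) : Prop :=
  (∀ n, 1 ≤ n → ContinuousOn (φ n) X) ∧
  (∀ n, 1 ≤ n → ∀ x ∈ X, 0 ≤ φ n x) ∧
  ∃ c > (0:ℝ), ∀ n m : ℕ, 1 ≤ n → 1 ≤ m → ∀ x ∈ X,
    φ (n + m) x ≤ c * φ n x * φ m (shiftMap^[n] x)

/-- `Φ_*(μ) = lim (1/n) ∫ log φ_n dμ` (realized as a `liminf` in `EReal`) -/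
def PhiStar {A : Type} [MeasurableSpace A] (μ : Measure (ℕ → A))
    (φ : ℕ → (ℕ → A) → ℝ) : EReal :=
  liminf (fun n : ℕ => (((n : ℝ)⁻¹ : ℝ) : EReal) * intlog μ (φ n)) atTop

/-- sub-multiplicative function on the language of `X` -/
def Submult {A : Type} (X : Set (ℕ → A)) (φ : List A → ℝ) : Prop :=
  (∀ I, Lang X I → 0 ≤ φ I) ∧ φ [] = 1 ∧
  ∃ c > (0:ℝ), ∀ I J : List A, Lang X (I ++ J) → φ (I ++ J) ≤ c⁻¹ * φ I * φ J

/-- the potential generated by a word function -/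
def genPot {A : Type} (φ : List A → ℝ) : ℕ → (ℕ → A) → ℝ := fun n x => φ (wordOf x n)

/-- the scaled potential `cΦ = (log φ_n^c)` -/
def scPot {Ω : Type*} (c : ℝ) (φ : ℕ → Ω → ℝ) : ℕ → Ω → ℝ := fun n x => φ n x ^ c

/-- the "pressure value" `Φ_*(μ) + h_μ` -/
def eqVal {A : Type} [Fintype A] [MeasurableSpace A] (X : Set (ℕ → A))
    (φ : ℕ → (ℕ → A) → ℝ) (μ : ProbabilityMeasure (ℕ → A)) : EReal :=
  PhiStar (μ : Measure (ℕ → A)) φ + ((ent X (μ : Measure (ℕ → A)) : ℝ) : EReal)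

/-- the set of equilibrium states of `Φ` -/
def EqSet {A : Type} [Fintype A] [MeasurableSpace A] (X : Set (ℕ → A))
    (φ : ℕ → (ℕ → A) → ℝ) : Set (ProbabilityMeasure (ℕ → A)) :=
  {μ | μ ∈ MInv X ∧ eqVal X φ μ = ⨆ η ∈ MInv X, eqVal X φ η}

/-- sequence map induced by a one-block map -/
def blockMap {A B : Type} (π : A → B) : (ℕ → A) → (ℕ → B) := fun x n => π (x n)

/-- pushforward of a probability measure under a one-block map -/
def pushM {A B : Type} [MeasurableSpace A] [MeasurableSpace B] (π : A → B)
    (μ : ProbabilityMeasure (ℕ → A)) : Measure (ℕ → B) :=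
  (μ : Measure (ℕ → A)).map (blockMap π)

/-- conditional equilibrium states of `Φ` over `ν` -/
def CondEqSet {A B : Type} [Fintype A] [MeasurableSpace A] [MeasurableSpace B]
    (X : Set (ℕ → A)) (π : A → B) (φ : ℕ → (ℕ → A) → ℝ) (ν : Measure (ℕ → B)) :
    Set (ProbabilityMeasure (ℕ → A)) :=
  {μ | μ ∈ MInv X ∧ pushM π μ = ν ∧
    eqVal X φ μ = ⨆ η ∈ {η | η ∈ MInv X ∧ pushM π η = ν}, eqVal X φ η}

/-- the projected word function `ψ(J) = Σ_{I : πI = J} φ(I)` -/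
def psiProj {A B : Type} [Fintype A] (X : Set (ℕ → A)) (π : A → B) (φ : List A → ℝ)
    (J : List B) : ℝ :=
  ∑ w : Fin J.length → A,
    if Lang X (List.ofFn w) ∧ List.map π (List.ofFn w) = J then φ (List.ofFn w) else 0

/-- `φ^{(2)}(J) = (Σ_{I : πI = J} φ(I)^{1/a₁})^{a₁}` -/
def phiTwo {A B : Type} [Fintype A] (X : Set (ℕ → A)) (π : A → B) (φ : List A → ℝ)
    (a₁ : ℝ) (J : List B) : ℝ :=
  (∑ w : Fin J.length → A,
    if Lang X (List.ofFn w) ∧ List.map π (List.ofFn w) = J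
    then φ (List.ofFn w) ^ a₁⁻¹ else 0) ^ a₁

/-- `a`-weighted pressure value for `k = 2` -/
def wVal2 {A B : Type} [Fintype A] [Fintype B] [MeasurableSpace A] [MeasurableSpace B]
    (X : Set (ℕ → A)) (Y : Set (ℕ → B)) (π : A → B) (φ : ℕ → (ℕ → A) → ℝ)
    (a₁ a₂ : ℝ) (μ : ProbabilityMeasure (ℕ → A)) : EReal :=
  PhiStar (μ : Measure (ℕ → A)) φ +
    ((a₁ * ent X (μ : Measure (ℕ → A)) + a₂ * ent Y (pushM π μ) : ℝ) : EReal)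

/-- the set of `a`-weighted equilibrium states, `k = 2` -/
def WEqSet2 {A B : Type} [Fintype A] [Fintype B] [MeasurableSpace A] [MeasurableSpace B]
    (X : Set (ℕ → A)) (Y : Set (ℕ → B)) (π : A → B) (φ : ℕ → (ℕ → A) → ℝ)
    (a₁ a₂ : ℝ) : Set (ProbabilityMeasure (ℕ → A)) :=
  {μ | μ ∈ MInv X ∧ wVal2 X Y π φ a₁ a₂ μ = ⨆ η ∈ MInv X, wVal2 X Y π φ a₁ a₂ η}

/-- convexity of a set of probability measures -/
def ConvexPM {Ω : Type*} [MeasurableSpace Ω] (S : Set (ProbabilityMeasure Ω)) : Prop :=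
  ∀ μ₁ ∈ S, ∀ μ₂ ∈ S, ∀ t : ℝ, 0 ≤ t → t ≤ 1 → ∀ μ : ProbabilityMeasure Ω,
    (μ : Measure Ω) = ENNReal.ofReal t • (μ₁ : Measure Ω) +
      ENNReal.ofReal (1 - t) • (μ₂ : Measure Ω) → μ ∈ S

/-- extreme points of a set of probability measures -/
def IsExtremePM {Ω : Type*} [MeasurableSpace Ω] (S : Set (ProbabilityMeasure Ω))
    (μ : ProbabilityMeasure Ω) : Prop :=
  μ ∈ S ∧ ∀ μ₁ ∈ S, ∀ μ₂ ∈ S, ∀ t : ℝ, 0 < t → t < 1 →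
    (μ : Measure Ω) = ENNReal.ofReal t • (μ₁ : Measure Ω) +
      ENNReal.ofReal (1 - t) • (μ₂ : Measure Ω) → μ₁ = μ₂

/-- the class `Ω_w(A*, p)` -/
def OmegaW {A : Type} [Fintype A] (p : ℕ) (f : List A → ℝ) : Prop :=
  (∀ I, 0 ≤ f I ∧ f I ≤ 1) ∧
  ∃ c > (0:ℝ),
    (∀ n : ℕ, ∑ w : Fin n → A, f (List.ofFn w) = 1) ∧
    (∀ I J : List A, ∃ K : List A, K.length ≤ p ∧ c * (f I * f J) ≤ f (I ++ K ++ J)) ∧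
    (∀ I : List A, ∃ i j : A, c * f I ≤ f (i :: I) ∧ c * f I ≤ f (I ++ [j]))

/-- the class `Ω(A*, p)` -/
def OmegaS {A : Type} [Fintype A] (p : ℕ) (f : List A → ℝ) : Prop :=
  (∀ I, 0 ≤ f I ∧ f I ≤ 1) ∧
  ∃ c > (0:ℝ),
    (∀ n : ℕ, ∑ w : Fin n → A, f (List.ofFn w) = 1) ∧
    (∀ I J : List A, ∃ K : List A, K.length = p ∧ c * (f I * f J) ≤ f (I ++ K ++ J))

/-- `f_{m,n}(I)` -/
def fmn {A : Type} [Fintype A] (f : List A → ℝ) (m n : ℕ) (I : List A) : ℝ :=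
  ∑ u : Fin m → A, ∑ v : Fin n → A, f (List.ofFn u ++ I ++ List.ofFn v)

/-- `f*(I) = sup_{m,n} f_{m,n}(I)` -/
def fstar {A : Type} [Fintype A] (f : List A → ℝ) (I : List A) : ℝ :=
  ⨆ m : ℕ, ⨆ n : ℕ, fmn f m n I

/-- the class `D_w(X, p)` -/
def Dw {A : Type} (X : Set (ℕ → A)) (p : ℕ) (φ : List A → ℝ) : Prop :=
  (∀ I, Lang X I → 0 ≤ φ I) ∧ (∃ I, Lang X I ∧ I ≠ [] ∧ 0 < φ I) ∧
  ∃ c : ℝ, 0 < c ∧ c ≤ 1 ∧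
    (∀ I J : List A, Lang X (I ++ J) → φ (I ++ J) ≤ c⁻¹ * φ I * φ J) ∧
    (∀ I J : List A, Lang X I → Lang X J →
      ∃ K : List A, K.length ≤ p ∧ Lang X (I ++ K ++ J) ∧
        c * (φ I * φ J) ≤ φ (I ++ K ++ J))

/-- the class `D(X, p)` -/
def Ds {A : Type} (X : Set (ℕ → A)) (p : ℕ) (φ : List A → ℝ) : Prop :=
  (∀ I, Lang X I → 0 ≤ φ I) ∧ (∃ I, Lang X I ∧ I ≠ [] ∧ 0 < φ I) ∧
  ∃ c : ℝ, 0 < c ∧ c ≤ 1 ∧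
    (∀ I J : List A, Lang X (I ++ J) → φ (I ++ J) ≤ c⁻¹ * φ I * φ J) ∧
    (∀ I J : List A, Lang X I → Lang X J →
      ∃ K : List A, K.length = p ∧ Lang X (I ++ K ++ J) ∧
        c * (φ I * φ J) ≤ φ (I ++ K ++ J))

end

noncomputable section

/-- iterated one-block maps along a chain of alphabets: `tauFrom π j i : B j → B (j+i)` -/
def tauFrom {B : ℕ → Type} (π : ∀ i, B i → B (i+1)) (j : ℕ) : (i : ℕ) → B j → B (j + i)
  | 0 => id
  | (i+1) => fun a => π (j + i) (tauFrom π j i a)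

/-- weighted pressure value along a chain starting at index `j`, with `k` weights `w 0, …, w (k-1)` -/
def wValGen {B : ℕ → Type} [∀ i, Fintype (B i)] [∀ i, MeasurableSpace (B i)]
    (π : ∀ i, B i → B (i+1)) (X : ∀ i, Set (ℕ → B i)) (j k : ℕ) (w : ℕ → ℝ)
    (φ : ℕ → (ℕ → B j) → ℝ) (μ : ProbabilityMeasure (ℕ → B j)) : EReal :=
  PhiStar (μ : Measure (ℕ → B j)) φ +
    ((∑ i ∈ Finset.range k, w i *
      ent (X (j + i)) ((μ : Measure (ℕ → B j)).map (blockMap (tauFrom π j i))) : ℝ) : EReal)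

/-- weighted equilibrium states along a chain -/
def wEqSetGen {B : ℕ → Type} [∀ i, Fintype (B i)] [∀ i, MeasurableSpace (B i)]
    (π : ∀ i, B i → B (i+1)) (X : ∀ i, Set (ℕ → B i)) (j k : ℕ) (w : ℕ → ℝ)
    (φ : ℕ → (ℕ → B j) → ℝ) : Set (ProbabilityMeasure (ℕ → B j)) :=
  {μ | μ ∈ MInv (X j) ∧
    wValGen π X j k w φ μ = ⨆ η ∈ MInv (X j), wValGen π X j k w φ η}

end

/-!
Let `u n` be the sum of `φ` over the words of length `n`. Submultiplicativity of `φ` gives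
`u (m + n) ≤ C * u m * u n`. Conversely, connecting every pair of words of lengths `m` and `n`
bounds `u m * u n` by a multiple of `∑ k ≤ p, u (m + k + n)`, and splitting off the extra letters
bounds this sum by a multiple of `u (m + n)`. Hence `log u` is additive up to a bounded error `D`,
and Fekete's lemma, applied to both `log u + D` and `D - log u`, places it within distance `D` of a
linear sequence.

For the one-letter extensions of `I`, fix a nonempty word `W` with `φ W > 0` and connect it to `I`.
All letters of the connected word beyond `I`, except the one next to `I`, form a word of bounded
length, on which `φ` is bounded.
-/

section RealSequences

/-- `a` is additive up to an error of at most `D`, i.e. a quasimorphism `ℕ → ℝ` of defect at most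
`D`. -/
def IsQuasiAdditive (a : ℕ → ℝ) (D : ℝ) : Prop :=
  ∀ m n, |a (m + n) - a m - a n| ≤ D

namespace IsQuasiAdditive

variable {a : ℕ → ℝ} {D : ℝ}

lemma neg (h : IsQuasiAdditive a D) : IsQuasiAdditive (-a) D := fun m n => by
  rw [← abs_neg]
  convert h m n using 2
  simp only [Pi.neg_apply]
  ring

lemma subadditive_add_const (h : IsQuasiAdditive a D) : Subadditive fun n => a n + D :=
  fun m n => by linarith [(abs_le.1 (h m n)).2]

lemma mul_sub_le_add (h : IsQuasiAdditive a D) (n : ℕ) : n * (a 1 - D) ≤ a n + D := by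
  induction n with
  | zero =>
    have h00 := (abs_le.1 (h 0 0)).2
    simp only [add_zero, sub_self, zero_sub] at h00
    simp only [Nat.cast_zero, zero_mul]
    linarith
  | succ n ih =>
    push_cast
    linarith [(abs_le.1 (h n 1)).1]

lemma exists_tendsto_div_mul_le (h : IsQuasiAdditive a D) :
    ∃ l, Tendsto (fun n : ℕ => a n / n) atTop (𝓝 l) ∧ ∀ n : ℕ, n * l ≤ a n + D := by
  have hbdd : BddBelow (Set.range fun n : ℕ => (a n + D) / n) := by
    refine ⟨min 0 (a 1 - D), Set.forall_mem_range.2 fun n => ?_⟩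
    rcases n.eq_zero_or_pos with rfl | hn
    · simp
    · exact (min_le_right _ _).trans <|
        (le_div_iff₀' (Nat.cast_pos.2 hn)).2 (h.mul_sub_le_add n)
  refine ⟨h.subadditive_add_const.lim, ?_, fun n => ?_⟩
  · simpa only [sub_zero, ← sub_div, add_sub_cancel_right] using
      (h.subadditive_add_const.tendsto_lim hbdd).sub (tendsto_const_div_atTop_nhds_zero_nat D)
  · rcases n.eq_zero_or_pos with rfl | hn
    · simpa using h.mul_sub_le_add 0
    · exact (le_div_iff₀' (Nat.cast_pos.2 hn)).1
        (h.subadditive_add_const.lim_le_div hbdd hn.ne')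

theorem exists_tendsto_div_abs_sub_le (h : IsQuasiAdditive a D) :
    ∃ l, Tendsto (fun n : ℕ => a n / n) atTop (𝓝 l) ∧ ∀ n : ℕ, |a n - n * l| ≤ D := by
  obtain ⟨l, hl, hlower⟩ := h.exists_tendsto_div_mul_le
  obtain ⟨l', hl', hupper⟩ := h.neg.exists_tendsto_div_mul_le
  have hll' : l' = -l :=
    tendsto_nhds_unique hl' (by simpa only [Pi.neg_apply, neg_div] using hl.neg)
  refine ⟨l, hl, fun n => abs_le.2 ⟨by linarith [hlower n], ?_⟩⟩
  have := hupper n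
  rw [hll', Pi.neg_apply] at this
  linarith

end IsQuasiAdditive

/-- The nonnegative sequence `u` turns sums into products up to a factor of `C` in either
direction. -/
structure IsQuasiMultiplicative (u : ℕ → ℝ) (C : ℝ) : Prop where
  nonneg : ∀ n, 0 ≤ u n
  map_add_le : ∀ m n, u (m + n) ≤ C * (u m * u n)
  mul_le_map_add : ∀ m n, u m * u n ≤ C * u (m + n)

namespace IsQuasiMultiplicative

variable {u : ℕ → ℝ} {C : ℝ} {k : ℕ}

lemma pos_of_pos (h : IsQuasiMultiplicative u C) (hk : k ≠ 0) (huk : 0 < u k) (n : ℕ) :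
    0 < u n := by
  have left_pos {m n : ℕ} (hmn : 0 < u (m + n)) : 0 < u m := by
    refine (h.nonneg m).lt_of_ne' fun hm => hmn.not_ge ?_
    simpa only [hm, zero_mul, mul_zero] using h.map_add_le m n
  have one_pos : 0 < u 1 := left_pos (n := k - 1) (by rwa [Nat.add_sub_cancel' (by lia)])
  induction n with
  | zero => exact left_pos (n := 1) (by rwa [zero_add])
  | succ n ih =>
    refine (h.nonneg _).lt_of_ne' fun hn => (mul_pos ih one_pos).not_ge ?_
    simpa only [hn, mul_zero] using h.mul_le_map_add n 1

lemma const_pos (h : IsQuasiMultiplicative u C) (huk : 0 < u k) : 0 < C :=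
  pos_of_mul_pos_left ((mul_pos huk huk).trans_le (h.mul_le_map_add k k)) (h.nonneg _)

lemma isQuasiAdditive_log (h : IsQuasiMultiplicative u C) (hu : ∀ n, 0 < u n) :
    IsQuasiAdditive (fun n => Real.log (u n)) (Real.log C) := fun m n => by
  have hC : C ≠ 0 := (h.const_pos (hu 0)).ne'
  have hne (n : ℕ) : u n ≠ 0 := (hu n).ne'
  have upper := Real.log_le_log (hu _) (h.map_add_le m n)
  have lower := Real.log_le_log (mul_pos (hu m) (hu n)) (h.mul_le_map_add m n)
  rw [Real.log_mul hC (mul_ne_zero (hne m) (hne n)), Real.log_mul (hne m) (hne n)] at upper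
  rw [Real.log_mul hC (hne _), Real.log_mul (hne m) (hne n)] at lower
  exact abs_le.2 ⟨by linarith, by linarith⟩

theorem exists_tendsto_log_div (h : IsQuasiMultiplicative u C) (hu : ∀ n, 0 < u n) :
    ∃ l, Tendsto (fun n : ℕ => Real.log (u n) / n) atTop (𝓝 l) ∧
      ∀ n : ℕ, C⁻¹ * Real.exp (n * l) ≤ u n ∧ u n ≤ C * Real.exp (n * l) := by
  obtain ⟨l, hl, hdist⟩ := (h.isQuasiAdditive_log hu).exists_tendsto_div_abs_sub_le
  refine ⟨l, hl, fun n => ?_⟩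
  obtain ⟨lower, upper⟩ := abs_le.1 (hdist n)
  rw [← Real.exp_log (h.const_pos (hu 0)), ← Real.exp_neg, ← Real.exp_add, ← Real.exp_add,
    ← Real.le_log_iff_exp_le (hu n), ← Real.log_le_iff_le_exp (hu n)]
  exact ⟨by linarith, by linarith⟩

end IsQuasiMultiplicative

end RealSequences

section WordSums

variable {A : Type*}

lemma exists_pos_bound_of_length_le [Finite A] (φ : List A → ℝ) (N : ℕ) :
    ∃ M > 0, ∀ I : List A, I.length ≤ N → φ I ≤ M := by
  obtain ⟨M, hM⟩ := ((List.finite_length_le A N).image φ).bddAbove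
  exact ⟨max M 1, by positivity, fun I hI => (hM ⟨I, hI, rfl⟩).trans (le_max_left _ _)⟩

variable [Fintype A]

/-- The sum of `g` over all words of length `n`. Words are indexed by `Fin n → A` rather than by
lists of length `n`. -/
def wordSum {M : Type*} [AddCommMonoid M] (g : List A → M) (n : ℕ) : M :=
  ∑ w : Fin n → A, g (List.ofFn w)

lemma wordSum_add {M : Type*} [AddCommMonoid M] (g : List A → M) (m n : ℕ) :
    wordSum g (m + n) = wordSum (fun I => wordSum (fun J => g (I ++ J)) n) m := by
  simp only [wordSum]
  rw [← Fintype.sum_prod_type', ← (Fin.appendEquiv m n).sum_comp]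
  simp only [Fin.appendEquiv, Equiv.coe_fn_mk, List.ofFn_fin_append]

lemma wordSum_mul_wordSum (g h : List A → ℝ) (m n : ℕ) :
    wordSum g m * wordSum h n = wordSum (fun I => wordSum (fun J => g I * h J) n) m :=
  Fintype.sum_mul_sum _ _

variable {g h : List A → ℝ} {C : ℝ} {p : ℕ}

lemma wordSum_mono (hgh : ∀ I, g I ≤ h I) (n : ℕ) : wordSum g n ≤ wordSum h n :=
  Finset.sum_le_sum fun _ _ => hgh _

lemma wordSum_nonneg (hg : ∀ I, 0 ≤ g I) (n : ℕ) : 0 ≤ wordSum g n :=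
  Finset.sum_nonneg fun _ _ => hg _

lemma le_wordSum_length (hg : ∀ I, 0 ≤ g I) (I : List A) : g I ≤ wordSum g I.length := by
  simpa only [wordSum, List.ofFn_get] using
    Finset.single_le_sum (f := fun w : Fin I.length → A => g (List.ofFn w))
      (fun _ _ => hg _) (Finset.mem_univ I.get)

lemma le_sum_wordSum (hg : ∀ I, 0 ≤ g I) {K : List A} (hK : K.length ≤ p) :
    g K ≤ ∑ k ∈ Finset.range (p + 1), wordSum g k :=
  (le_wordSum_length hg K).trans <| Finset.single_le_sum (f := wordSum g)
    (fun _ _ => wordSum_nonneg hg _) (Finset.mem_range_succ_iff.2 hK)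

lemma wordSum_add_le (hsub : ∀ I J, g (I ++ J) ≤ C * (g I * g J)) (m n : ℕ) :
    wordSum g (m + n) ≤ C * (wordSum g m * wordSum g n) :=
  calc wordSum g (m + n)
      = wordSum (fun I => wordSum (fun J => g (I ++ J)) n) m := wordSum_add g m n
    _ ≤ wordSum (fun I => wordSum (fun J => C * (g I * g J)) n) m :=
        wordSum_mono (fun I => wordSum_mono (hsub I) n) m
    _ = C * (wordSum g m * wordSum g n) := by
        rw [wordSum_mul_wordSum]
        simp only [wordSum, Finset.mul_sum]

lemma sum_wordSum_add_add (g : List A → ℝ) (s : Finset ℕ) (m n : ℕ) :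
    ∑ k ∈ s, wordSum g (m + k + n) =
      wordSum (fun I => wordSum (fun J => ∑ k ∈ s, wordSum (fun K => g (I ++ K ++ J)) k) n) m := by
  simp only [wordSum_add]
  simp only [wordSum]
  rw [Finset.sum_comm]
  refine Finset.sum_congr rfl fun u _ => ?_
  rw [Finset.sum_comm (s := Finset.univ)]
  exact Finset.sum_congr rfl fun k _ => Finset.sum_comm

lemma wordSum_mul_le_sum (hg : ∀ I, 0 ≤ g I) (hC : 0 ≤ C)
    (hconn : ∀ I J, ∃ K : List A, K.length ≤ p ∧ g I * g J ≤ C * g (I ++ K ++ J)) (m n : ℕ) :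
    wordSum g m * wordSum g n ≤ C * ∑ k ∈ Finset.range (p + 1), wordSum g (m + k + n) := by
  have hpair (I J : List A) :
      g I * g J ≤ C * ∑ k ∈ Finset.range (p + 1), wordSum (fun K => g (I ++ K ++ J)) k := by
    obtain ⟨K, hK, hle⟩ := hconn I J
    exact hle.trans <| mul_le_mul_of_nonneg_left
      (le_sum_wordSum (g := fun K => g (I ++ K ++ J)) (fun _ => hg _) hK) hC
  rw [wordSum_mul_wordSum, sum_wordSum_add_add]
  refine (wordSum_mono (fun I => wordSum_mono (hpair I) n) m).trans_eq ?_
  simp only [wordSum, Finset.mul_sum]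

lemma wordSum_mul_le (hg : ∀ I, 0 ≤ g I) (hC : 0 ≤ C)
    (hsub : ∀ I J, g (I ++ J) ≤ C * (g I * g J))
    (hconn : ∀ I J, ∃ K : List A, K.length ≤ p ∧ g I * g J ≤ C * g (I ++ K ++ J)) (m n : ℕ) :
    wordSum g m * wordSum g n ≤
      C * (C * ∑ k ∈ Finset.range (p + 1), wordSum g k) * wordSum g (m + n) :=
  calc wordSum g m * wordSum g n
      ≤ C * ∑ k ∈ Finset.range (p + 1), wordSum g (m + k + n) :=
        wordSum_mul_le_sum hg hC hconn m n
    _ ≤ C * ∑ k ∈ Finset.range (p + 1), C * (wordSum g (m + n) * wordSum g k) := by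
        gcongr with k
        rw [add_right_comm]
        exact wordSum_add_le hsub (m + n) k
    _ = C * (C * ∑ k ∈ Finset.range (p + 1), wordSum g k) * wordSum g (m + n) := by
        simp only [← Finset.mul_sum]
        ring

lemma exists_isQuasiMultiplicative_wordSum (hg : ∀ I, 0 ≤ g I) (hC : 0 ≤ C)
    (hsub : ∀ I J, g (I ++ J) ≤ C * (g I * g J))
    (hconn : ∀ I J, ∃ K : List A, K.length ≤ p ∧ g I * g J ≤ C * g (I ++ K ++ J)) :
    ∃ C', IsQuasiMultiplicative (wordSum g) C' := by
  have hS := wordSum_nonneg hg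
  refine ⟨max C (C * (C * ∑ k ∈ Finset.range (p + 1), wordSum g k)), hS, fun m n => ?_,
    fun m n => ?_⟩
  · exact (wordSum_add_le hsub m n).trans <|
      mul_le_mul_of_nonneg_right (le_max_left _ _) (mul_nonneg (hS m) (hS n))
  · exact (wordSum_mul_le hg hC hsub hconn m n).trans <|
      mul_le_mul_of_nonneg_right (le_max_right _ _) (hS _)

end WordSums

section Language

variable {A : Type} {X : Set (ℕ → A)} {I J : List A} {φ : List A → ℝ} {C M : ℝ} {N p : ℕ}

lemma Lang.of_append_left (h : Lang X (I ++ J)) : Lang X I := by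
  obtain ⟨x, hx, hxX⟩ := h
  refine ⟨x, fun i => ?_, hxX⟩
  simpa [List.getElem_append_left i.2] using hx ⟨i, by grind⟩

lemma Lang.of_cons (hX : shiftMap '' X ⊆ X) {i : A} (h : Lang X (i :: I)) : Lang X I := by
  obtain ⟨x, hx, hxX⟩ := h
  exact ⟨shiftMap x, fun k => hx k.succ, hX ⟨x, hxX, rfl⟩⟩

lemma Lang.of_append_right (hX : shiftMap '' X ⊆ X) (h : Lang X (I ++ J)) : Lang X J := by
  induction I with
  | nil => exact h
  | cons i I ih => exact ih (h.of_cons hX)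

lemma exists_lang_cons_of_append (hX : shiftMap '' X ⊆ X) (hnn : ∀ I, Lang X I → 0 ≤ φ I)
    (hC : 0 ≤ C) (hsub : ∀ I J, Lang X (I ++ J) → φ (I ++ J) ≤ C * (φ I * φ J))
    (hM : ∀ P : List A, P.length ≤ N → φ P ≤ M) (hJ : J ≠ []) (hJN : J.length ≤ N)
    (hJI : Lang X (J ++ I)) :
    ∃ i, Lang X (i :: I) ∧ φ (J ++ I) ≤ C * M * φ (i :: I) := by
  have hsplit : J ++ I = J.dropLast ++ J.getLast hJ :: I := by
    rw [List.append_cons, List.dropLast_append_getLast]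
  rw [hsplit] at hJI ⊢
  have hcons := hJI.of_append_right hX
  have hP : φ J.dropLast ≤ M := hM _ (by grind)
  refine ⟨_, hcons, (hsub _ _ hJI).trans ?_⟩
  rw [mul_assoc]
  gcongr
  exact hnn _ hcons

lemma exists_lang_concat_of_append (hnn : ∀ I, Lang X I → 0 ≤ φ I)
    (hC : 0 ≤ C) (hsub : ∀ I J, Lang X (I ++ J) → φ (I ++ J) ≤ C * (φ I * φ J))
    (hM : ∀ P : List A, P.length ≤ N → φ P ≤ M) (hJ : J ≠ []) (hJN : J.length ≤ N)
    (hIJ : Lang X (I ++ J)) :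
    ∃ j, Lang X (I ++ [j]) ∧ φ (I ++ J) ≤ C * M * φ (I ++ [j]) := by
  have hsplit : I ++ J = I ++ [J.head hJ] ++ J.tail := by
    rw [← List.append_cons, List.cons_head_tail]
  rw [hsplit] at hIJ ⊢
  have hconcat := hIJ.of_append_left
  have hP : φ J.tail ≤ M := hM _ (by grind)
  refine ⟨_, hconcat, (hsub _ _ hIJ).trans ?_⟩
  rw [mul_assoc, mul_comm (φ _)]
  gcongr
  exact hnn _ hconcat

namespace Dw

lemma exists_const (hφ : Dw X p φ) :
    ∃ C > 0, (∀ I J, Lang X (I ++ J) → φ (I ++ J) ≤ C * (φ I * φ J)) ∧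
      ∀ I J, Lang X I → Lang X J →
        ∃ K : List A, K.length ≤ p ∧ Lang X (I ++ K ++ J) ∧ φ I * φ J ≤ C * φ (I ++ K ++ J) := by
  obtain ⟨-, -, c, hc, -, hsub, hconn⟩ := hφ
  refine ⟨c⁻¹, inv_pos.2 hc, fun I J h => (hsub I J h).trans_eq (mul_assoc _ _ _),
    fun I J hI hJ => ?_⟩
  obtain ⟨K, hK, hL, hle⟩ := hconn I J hI hJ
  exact ⟨K, hK, hL, (le_inv_mul_iff₀ hc).2 hle⟩

theorem exists_extension_const [Finite A] (hX : shiftMap '' X ⊆ X) (hφ : Dw X p φ) :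
    ∃ γ > 0, ∀ I, Lang X I →
      ∃ i j, Lang X (i :: I) ∧ Lang X (I ++ [j]) ∧
        γ * φ I ≤ φ (i :: I) ∧ γ * φ I ≤ φ (I ++ [j]) := by
  obtain ⟨C, hC, hsub, hconn⟩ := hφ.exists_const
  obtain ⟨hnn, ⟨W, hW, hWne, hWpos⟩, -⟩ := hφ
  obtain ⟨M, hM, hMle⟩ := exists_pos_bound_of_length_le φ (W.length + p)
  have hγ {x y z : ℝ} (hxy : φ W * x ≤ C * y) (hyz : y ≤ C * M * z) :
      φ W / (C * (C * M)) * x ≤ z := by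
    rw [div_mul_eq_mul_div, div_le_iff₀' (by positivity), mul_assoc C]
    exact hxy.trans (by gcongr)
  refine ⟨φ W / (C * (C * M)), by positivity, fun I hI => ?_⟩
  obtain ⟨K, hK, hWKI, hle⟩ := hconn W I hW hI
  obtain ⟨i, hi, hi_le⟩ := exists_lang_cons_of_append hX hnn hC.le hsub hMle
    (List.append_ne_nil_of_left_ne_nil hWne K) (by grind) hWKI
  obtain ⟨K', hK', hIKW, hle'⟩ := hconn I W hI hW
  rw [List.append_assoc, mul_comm] at hle'
  rw [List.append_assoc] at hIKW
  obtain ⟨j, hj, hj_le⟩ := exists_lang_concat_of_append hnn hC.le hsub hMle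
    (List.append_ne_nil_of_right_ne_nil K' hWne) (by grind) hIKW
  exact ⟨i, j, hi, hj, hγ hle hi_le, hγ hle' hj_le⟩

end Dw

/-- The sum `u_n = Σ_{J ∈ L_n(X)} φ(J)`, as a sum over all words of length `n` in which those
outside the language contribute `0`. -/
noncomputable def partitionSum [Fintype A] (X : Set (ℕ → A)) (φ : List A → ℝ) : ℕ → ℝ :=
  wordSum fun I => if Lang X I then φ I else 0

namespace Dw

lemma exists_isQuasiMultiplicative_partitionSum [Fintype A] (hX : shiftMap '' X ⊆ X)
    (hφ : Dw X p φ) : ∃ C, IsQuasiMultiplicative (partitionSum X φ) C := by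
  obtain ⟨C, hC, hsub, hconn⟩ := hφ.exists_const
  have hnn (I : List A) : 0 ≤ if Lang X I then φ I else 0 := by
    split_ifs with hI
    exacts [hφ.1 I hI, le_rfl]
  refine exists_isQuasiMultiplicative_wordSum (p := p) hnn hC.le (fun I J => ?_) fun I J => ?_
  · by_cases hIJ : Lang X (I ++ J)
    · simpa only [hIJ, hIJ.of_append_left, hIJ.of_append_right hX, if_true] using hsub I J hIJ
    · rw [if_neg hIJ]
      exact mul_nonneg hC.le (mul_nonneg (hnn I) (hnn J))
  · by_cases hIJ : Lang X I ∧ Lang X J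
    · obtain ⟨K, hK, hL, hle⟩ := hconn I J hIJ.1 hIJ.2
      exact ⟨K, hK, by simpa only [hIJ.1, hIJ.2, hL, if_true] using hle⟩
    · refine ⟨[], p.zero_le, ?_⟩
      rw [ite_zero_mul_ite_zero, if_neg hIJ]
      exact mul_nonneg hC.le (hnn _)

lemma exists_partitionSum_pos [Fintype A] (hφ : Dw X p φ) : ∃ k ≠ 0, 0 < partitionSum X φ k := by
  obtain ⟨hnn, ⟨W, hW, hWne, hWpos⟩, -⟩ := hφ
  refine ⟨W.length, by simpa, hWpos.trans_le ?_⟩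
  simpa only [partitionSum, hW, if_true] using le_wordSum_length
    (g := fun I => if Lang X I then φ I else 0) (fun I => by grind) W

theorem exists_tendsto_log_partitionSum_div [Fintype A] (hX : shiftMap '' X ⊆ X)
    (hφ : Dw X p φ) :
    ∃ u, Tendsto (fun n : ℕ => Real.log (partitionSum X φ n) / n) atTop (𝓝 u) ∧
      ∃ c > 0, ∀ n : ℕ, c⁻¹ * Real.exp (n * u) ≤ partitionSum X φ n ∧
        partitionSum X φ n ≤ c * Real.exp (n * u) := by
  obtain ⟨C, hC⟩ := hφ.exists_isQuasiMultiplicative_partitionSum hX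
  obtain ⟨k, hk, hpos⟩ := hφ.exists_partitionSum_pos
  obtain ⟨u, hu, hbounds⟩ := hC.exists_tendsto_log_div (hC.pos_of_pos hk hpos)
  exact ⟨u, hu, C, hC.const_pos hpos, hbounds⟩

end Dw

theorem weighted_eq_states_stmt_12_general [Fintype A] (hX : shiftMap '' X ⊆ X)
    (hφ : Dw X p φ) :
    (∃ γ > 0, ∀ I, Lang X I →
      ∃ i j, Lang X (i :: I) ∧ Lang X (I ++ [j]) ∧
        γ * φ I ≤ φ (i :: I) ∧ γ * φ I ≤ φ (I ++ [j])) ∧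
    ∃ u, Tendsto (fun n : ℕ => Real.log (partitionSum X φ n) / n) atTop (𝓝 u) ∧
      ∃ c > 0, ∀ n : ℕ, c⁻¹ * Real.exp (n * u) ≤ partitionSum X φ n ∧
        partitionSum X φ n ≤ c * Real.exp (n * u) :=
  ⟨hφ.exists_extension_const hX, hφ.exists_tendsto_log_partitionSum_div hX⟩

end Language

/-- Lemma 5.1 / `lem-g1`: for `φ ∈ D_w(X,p)`, (i) there is `γ > 0` such that
each `I ∈ L(X)` extends by one symbol on either side with `φ` dropping by at most the factor
`γ`; (ii) `u = lim (1/n) log u_n` exists with `u_n ≍ exp(nu)`, where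
`u_n = Σ_{J ∈ L_n(X)} φ(J)`. -/
theorem weighted_eq_states_stmt_12 {A : Type} [Fintype A] [TopologicalSpace A]
    [DiscreteTopology A]
    (X : Set (ℕ → A)) (hX : IsSubshift X) (p : ℕ) (φ : List A → ℝ) (hφ : Dw X p φ) :
    (∃ γ > (0:ℝ), ∀ I : List A, Lang X I →
      ∃ i j : A, Lang X (i :: I) ∧ Lang X (I ++ [j]) ∧
        γ * φ I ≤ φ (i :: I) ∧ γ * φ I ≤ φ (I ++ [j])) ∧
    ∃ u : ℝ,
      Tendsto (fun n : ℕ =>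
          Real.log (∑ w : Fin n → A, if Lang X (List.ofFn w) then φ (List.ofFn w) else 0) / n)
        atTop (nhds u) ∧
      ∃ c > (0:ℝ), ∀ n : ℕ, 1 ≤ n →
        c⁻¹ * Real.exp (n * u) ≤
            (∑ w : Fin n → A, if Lang X (List.ofFn w) then φ (List.ofFn w) else 0) ∧
        (∑ w : Fin n → A, if Lang X (List.ofFn w) then φ (List.ofFn w) else 0) ≤
          c * Real.exp (n * u) := by
  obtain ⟨hext, u, hu, c, hc, hbounds⟩ := weighted_eq_states_stmt_12_general hX.2.2 hφ
  exact ⟨hext, u, hu, c, hc, fun n _ => hbounds n⟩
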